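/- Let α > 0 and k be real numbers with 0 ≤ k ≤ α, let c > 0, let λ > 0, let μ : ℕ → ℝ satisfy μ_i ≥ c · i^{-2α} for every i ≥ 1, and let f : ℕ → ℝ. Then Σ_{i=1}^∞ (λ/(λ + μ_i)) · i^{k} · |f_i| ≤ (1/min(1,c)) · λ^{1/2 - k/(2α)} · Σ_{i=1}^∞ i^{α} · |f_i|, where both sides are sums of nonnegative terms (possibly infinite). -/

import Mathlib

/-!
Put `s = x ^ (-2α)`, `a = λ / c` and `θ = 1/2 - k/(2α)`, so that `x ^ k = s ^ θ * x ^ α` and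
`λ / (λ + μ) ≤ a / (a + s)`. The bound at frequency `x` becomes `a / (a + s) * s ^ θ ≤ a ^ θ`, which
follows from weighted AM-GM for `a` and `s` since `θ ∈ [0, 1]`.
-/

open Set

section ResolventBound

variable {a c m s θ : ℝ}

lemma rpow_one_sub_mul_rpow_le_add (ha : 0 ≤ a) (hs : 0 ≤ s) (hθ : θ ∈ Icc 0 1) :
    a ^ (1 - θ) * s ^ θ ≤ a + s :=
  calc a ^ (1 - θ) * s ^ θ ≤ (1 - θ) * a + θ * s :=
        Real.geom_mean_le_arith_mean2_weighted (sub_nonneg.2 hθ.2) hθ.1 ha hs (sub_add_cancel 1 θ)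
    _ ≤ a + s :=
        add_le_add (mul_le_of_le_one_left ha (sub_le_self 1 hθ.1)) (mul_le_of_le_one_left hs hθ.2)

lemma div_add_mul_rpow_le_rpow (ha : 0 ≤ a) (hs : 0 ≤ s) (hθ : θ ∈ Icc 0 1) :
    a / (a + s) * s ^ θ ≤ a ^ θ := by
  rw [div_mul_eq_mul_div]
  refine div_le_of_le_mul₀ (add_nonneg ha hs) (Real.rpow_nonneg ha θ) ?_
  calc a * s ^ θ = a ^ θ * (a ^ (1 - θ) * s ^ θ) := by
        rw [← mul_assoc, ← Real.rpow_add_of_nonneg ha hθ.1 (sub_nonneg.2 hθ.2), add_sub_cancel,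
          Real.rpow_one]
    _ ≤ a ^ θ * (a + s) :=
        mul_le_mul_of_nonneg_left (rpow_one_sub_mul_rpow_le_add ha hs hθ) (Real.rpow_nonneg ha θ)

lemma div_add_mul_rpow_le_div_rpow (ha : 0 ≤ a) (hc : 0 < c) (hs : 0 < s) (hm : c * s ≤ m)
    (hθ : θ ∈ Icc 0 1) : a / (a + m) * s ^ θ ≤ (a / c) ^ θ :=
  calc a / (a + m) * s ^ θ ≤ a / (a + c * s) * s ^ θ := by gcongr
    _ = a / c / (a / c + s) * s ^ θ := by field_simp
    _ ≤ (a / c) ^ θ := div_add_mul_rpow_le_rpow (div_nonneg ha hc.le) hs.le hθ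

lemma min_one_le_rpow (hc : 0 ≤ c) (hθ : θ ∈ Icc 0 1) : min 1 c ≤ c ^ θ := by
  have hmin : 0 ≤ min 1 c := le_min zero_le_one hc
  calc min 1 c ≤ min 1 c ^ θ := Real.self_le_rpow_of_le_one hmin (min_le_left 1 c) hθ.2
    _ ≤ c ^ θ := Real.rpow_le_rpow hmin (min_le_right 1 c) hθ.1

lemma div_rpow_le_one_div_min_mul_rpow (ha : 0 ≤ a) (hc : 0 < c) (hθ : θ ∈ Icc 0 1) :
    (a / c) ^ θ ≤ 1 / min 1 c * a ^ θ := by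
  rw [Real.div_rpow ha hc.le, one_div_mul_eq_div]
  exact div_le_div_of_nonneg_left (Real.rpow_nonneg ha θ) (lt_min one_pos hc)
    (min_one_le_rpow hc.le hθ)

end ResolventBound

section PolynomialDecay

variable {α k : ℝ}

lemma half_sub_div_two_mul_mem_Icc (hk : |k| ≤ |α|) : 1 / 2 - k / (2 * α) ∈ Icc (0 : ℝ) 1 := by
  have hratio : |k / α| ≤ 1 := by
    rw [abs_div]
    exact div_le_one_of_le₀ hk (abs_nonneg α)
  rw [mul_comm, ← div_div]
  constructor <;> linarith [abs_le.1 hratio]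

lemma rpow_eq_rpow_neg_two_mul_rpow_mul {x : ℝ} (hx : 0 < x) (hα : α ≠ 0) :
    x ^ k = (x ^ (-(2 * α))) ^ (1 / 2 - k / (2 * α)) * x ^ α := by
  rw [← Real.rpow_mul hx.le, ← Real.rpow_add hx]
  congr 1
  field_simp
  ring

lemma div_add_mul_rpow_le_of_mul_rpow_le {c lam m x : ℝ} (hα : α ≠ 0) (hk : |k| ≤ |α|)
    (hc : 0 < c) (hlam : 0 ≤ lam) (hx : 0 < x) (hm : c * x ^ (-(2 * α)) ≤ m) :
    lam / (lam + m) * x ^ k ≤ (lam / c) ^ (1 / 2 - k / (2 * α)) * x ^ α := by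
  rw [rpow_eq_rpow_neg_two_mul_rpow_mul hx hα, ← mul_assoc]
  exact mul_le_mul_of_nonneg_right
    (div_add_mul_rpow_le_div_rpow hlam hc (Real.rpow_pos_of_pos hx _) hm
      (half_sub_div_two_mul_mem_Icc hk))
    (Real.rpow_nonneg hx.le α)

theorem stmt3_general {ι E : Type*} [SeminormedAddGroup E] {c lam : ℝ} {x μ : ι → ℝ}
    (hα : α ≠ 0) (hk : |k| ≤ |α|) (hc : 0 < c) (hlam : 0 ≤ lam) (hx : ∀ i, 0 < x i)
    (hμ : ∀ i, c * x i ^ (-(2 * α)) ≤ μ i) (f : ι → E) :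
    ∑' i, ENNReal.ofReal (lam / (lam + μ i) * x i ^ k * ‖f i‖)
      ≤ ENNReal.ofReal ((lam / c) ^ (1 / 2 - k / (2 * α))) *
          ∑' i, ENNReal.ofReal (x i ^ α * ‖f i‖) := by
  rw [← ENNReal.tsum_mul_left]
  refine ENNReal.tsum_le_tsum fun i ↦ ?_
  rw [← ENNReal.ofReal_mul (Real.rpow_nonneg (div_nonneg hlam hc.le) _), ← mul_assoc]
  exact ENNReal.ofReal_le_ofReal <| mul_le_mul_of_nonneg_right
    (div_add_mul_rpow_le_of_mul_rpow_le hα hk hc hlam (hx i) (hμ i)) (norm_nonneg (f i))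

end PolynomialDecay

/-- Coefficient-wise bias bound for kernels with polynomially decaying
eigenvalues: if `μ_i ≥ c·i^(-2α)` for all `i ≥ 1`, then
`Σ_{i≥1} (λ/(λ+μ_i))·i^k·|f_i| ≤ (1/min(1,c))·λ^(1/2-k/(2α))·Σ_{i≥1} i^α·|f_i|`,
as sums of nonnegative extended reals. -/
theorem stmt3 (α k c lam : ℝ) (hα : 0 < α) (hk0 : 0 ≤ k) (hkα : k ≤ α)
    (hc : 0 < c) (hlam : 0 < lam) (μ f : ℕ → ℝ)
    (hμ : ∀ i : ℕ, 1 ≤ i → c * (i : ℝ) ^ (-(2 * α)) ≤ μ i) :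
    ∑' i : ℕ, ENNReal.ofReal
        ((lam / (lam + μ (i + 1))) * ((i + 1 : ℕ) : ℝ) ^ k * |f (i + 1)|)
      ≤ ENNReal.ofReal ((1 / min 1 c) * lam ^ (1 / 2 - k / (2 * α))) *
          ∑' i : ℕ, ENNReal.ofReal (((i + 1 : ℕ) : ℝ) ^ α * |f (i + 1)|) := by
  have hk : |k| ≤ |α| := abs_le_abs_of_nonneg hk0 hkα
  refine (stmt3_general hα.ne' hk hc hlam.le (fun i ↦ Nat.cast_pos.2 i.succ_pos)
    (fun i ↦ hμ (i + 1) i.succ_pos) fun i ↦ f (i + 1)).trans (mul_le_mul' ?_ le_rfl)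
  exact ENNReal.ofReal_le_ofReal
    (div_rpow_le_one_div_min_mul_rpow hlam.le hc (half_sub_div_two_mul_mem_Icc hk))
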